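/- In the setting of the previous optimization, when n < 4ρ², the optimal α* = (n/(n+m))(1 + √(m²/(4ρ²(n+m) − nm))) satisfies α* ∈ (n/(n+m), 1); in particular α* strictly exceeds the natural weight n/(n+m) whenever D > 0. -/

import Mathlib

open MeasureTheory Real Filter
open scoped NNReal ENNReal
noncomputable def phi (x : ℝ) : ℝ := (Real.sqrt (2*Real.pi))⁻¹ * Real.exp (-x^2/2)
noncomputable def Phi (t : ℝ) : ℝ := ∫ x in Set.Iio t, phi x

/-!
Write `R = 4ρ²` and `K = R(n + m) - nm`. The weight `n / (n + m)` scaled by `1 + √(m² / K)` is below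
`1` exactly when `√(m² / K) < m / n`, that is, when `n² < K`; and `K - n² = (R - n)(n + m)`.
-/

theorem sq_lt_mul_add_sub_mul_iff {S : Type*} [CommRing S] [LinearOrder S] [IsStrictOrderedRing S]
    {n m R : S} (hnm : 0 < n + m) : n ^ 2 < R * (n + m) - n * m ↔ n < R := by
  have factor : R * (n + m) - n * m - n ^ 2 = (R - n) * (n + m) := by ring
  rw [← sub_pos, factor, mul_pos_iff_of_pos_right hnm, sub_pos]

theorem div_add_mul_one_add_lt_one_iff {F : Type*} [Field F] [LinearOrder F]
    [IsStrictOrderedRing F] {n m s : F} (hn : 0 < n) (hnm : 0 < n + m) :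
    n / (n + m) * (1 + s) < 1 ↔ s < m / n := by
  rw [div_mul_eq_mul_div, div_lt_one hnm, mul_one_add, add_lt_add_iff_left, lt_div_iff₀' hn]

theorem sqrt_sq_div_lt_div_iff {n m K : ℝ} (hn : 0 < n) (hm : 0 < m) (hK : 0 < K) :
    √(m ^ 2 / K) < m / n ↔ n ^ 2 < K := by
  rw [sqrt_lt' (div_pos hm hn), div_pow,
    div_lt_div_iff_of_pos_left (pow_pos hm 2) hK (pow_pos hn 2)]

theorem stmt14 (n m C D : ℝ) (hn : 0 < n) (hm : 0 < m) (hC : 0 < C) (hD : 0 < D)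
    (h : n < 4 * (C / D) ^ 2) :
    n / (n + m) <
      (n / (n + m)) * (1 + Real.sqrt (m ^ 2 / (4 * (C / D) ^ 2 * (n + m) - n * m))) ∧
    (n / (n + m)) * (1 + Real.sqrt (m ^ 2 / (4 * (C / D) ^ 2 * (n + m) - n * m))) < 1 := by
  have hnm : 0 < n + m := add_pos hn hm
  have sq_lt : n ^ 2 < 4 * (C / D) ^ 2 * (n + m) - n * m := (sq_lt_mul_add_sub_mul_iff hnm).2 h
  have denom_pos : 0 < 4 * (C / D) ^ 2 * (n + m) - n * m := (sq_nonneg n).trans_lt sq_lt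
  constructor
  · rw [lt_mul_iff_one_lt_right (div_pos hn hnm), lt_add_iff_pos_right]
    exact sqrt_pos.2 (div_pos (pow_pos hm 2) denom_pos)
  · rw [div_add_mul_one_add_lt_one_iff hn hnm]
    exact (sqrt_sq_div_lt_div_iff hn hm denom_pos).2 sq_lt
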